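/- Let m be a natural number with m ≥ 1. Then ∫_ℝ 1/((x−i)^{m+3}·(x+i)^m) dx = −2πi·4^{−(m+1)}·C(2m+1, m+2), where 4^{−(m+1)} denotes the integer power of 4 with exponent −(m+1). -/

import Mathlib

open MeasureTheory Complex

lemma aux_ne (x : ℝ) (c : ℂ) (hc : c.im ≠ 0) : (x : ℂ) + c ≠ 0 := by
  intro h
  apply hc
  have := congrArg Complex.im h
  simpa using this

lemma aux_neS (x : ℝ) : (x : ℂ) - I ≠ 0 := by
  rw [sub_eq_add_neg]; exact aux_ne x _ (by simp)

lemma aux_neA (x : ℝ) : (x : ℂ) + I ≠ 0 := aux_ne x _ (by simp)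

lemma aux_int (a b : ℕ) (h : 2 ≤ a + b) :
    Integrable (fun x : ℝ => (((x : ℂ) - I) ^ a * ((x : ℂ) + I) ^ b)⁻¹) := by
  refine Integrable.mono' integrable_inv_one_add_sq ?_ ?_
  · apply Continuous.aestronglyMeasurable
    refine Continuous.inv₀ (by fun_prop) ?_
    intro x
    exact mul_ne_zero (pow_ne_zero _ (aux_neS x)) (pow_ne_zero _ (aux_neA x))
  · refine Filter.Eventually.of_forall fun x => ?_
    have h1 : ‖(x : ℂ) - I‖ ^ 2 = 1 + x ^ 2 := by
      rw [← Complex.normSq_eq_norm_sq, Complex.normSq_apply]; simp; ring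
    have h2 : ‖(x : ℂ) + I‖ ^ 2 = 1 + x ^ 2 := by
      rw [← Complex.normSq_eq_norm_sq, Complex.normSq_apply]; simp; ring
    have h3 : ‖(x : ℂ) + I‖ = ‖(x : ℂ) - I‖ := by
      rw [← sq_eq_sq₀ (norm_nonneg _) (norm_nonneg _), h1, h2]
    have h4 : 1 ≤ ‖(x : ℂ) - I‖ := by
      nlinarith [norm_nonneg ((x : ℂ) - I), sq_nonneg x]
    rw [norm_inv, norm_mul, norm_pow, norm_pow, h3, ← pow_add, ← h1]
    apply inv_anti₀ (by positivity)
    exact pow_le_pow_right₀ h4 h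

lemma aux_tendsto (c : ℂ) :
    Filter.Tendsto (fun x : ℝ => ((x : ℂ) + c)⁻¹) (Filter.cocompact ℝ) (nhds 0) := by
  have h1 := Complex.isometry_ofReal.isClosedEmbedding.tendsto_cocompact
  have h2 := (Homeomorph.addRight c).isClosedEmbedding.tendsto_cocompact
  have h3 := (Filter.tendsto_inv₀_cobounded (α := ℂ))
  rw [← Metric.cobounded_eq_cocompact (α := ℂ)] at h1 h2
  exact h3.comp (h2.comp h1)

lemma aux_zero (c : ℂ) (hc : c.im ≠ 0) (n : ℕ)
    (hi : Integrable (fun x : ℝ => (((x : ℂ) + c) ^ (n + 2))⁻¹)) :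
    ∫ x : ℝ, (((x : ℂ) + c) ^ (n + 2))⁻¹ = 0 := by
  have ht : Filter.Tendsto (fun x : ℝ => -((n : ℂ) + 1)⁻¹ * (((x : ℂ) + c)⁻¹) ^ (n + 1))
      (Filter.cocompact ℝ) (nhds 0) := by
    simpa using ((aux_tendsto c).pow (n + 1)).const_mul (-((n : ℂ) + 1)⁻¹)
  have := integral_of_hasDerivAt_of_tendsto
    (f := fun x : ℝ => -((n : ℂ) + 1)⁻¹ * (((x : ℂ) + c)⁻¹) ^ (n + 1))
    (f' := fun x : ℝ => (((x : ℂ) + c) ^ (n + 2))⁻¹) ?_ hi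
    (ht.mono_left atBot_le_cocompact) (ht.mono_left atTop_le_cocompact)
  · simpa using this
  · intro x
    have hx := aux_ne x c hc
    have hn : (n : ℂ) + 1 ≠ 0 := by exact_mod_cast Nat.succ_ne_zero n
    have h := (((((hasDerivAt_id x).ofReal_comp).add_const c).inv hx).pow (n + 1)).const_mul
      (-((n : ℂ) + 1)⁻¹)
    refine h.congr_deriv ?_
    simp
    field_simp
    ring

lemma aux_rec (a b : ℕ) (h : 1 ≤ a + b) :
    ∫ x : ℝ, (((x : ℂ) - I) ^ (a + 1) * ((x : ℂ) + I) ^ (b + 1))⁻¹ =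
      (2 * I)⁻¹ * ((∫ x : ℝ, (((x : ℂ) - I) ^ (a + 1) * ((x : ℂ) + I) ^ b)⁻¹) -
        ∫ x : ℝ, (((x : ℂ) - I) ^ a * ((x : ℂ) + I) ^ (b + 1))⁻¹) := by
  rw [← integral_sub (aux_int _ _ (by omega)) (aux_int _ _ (by omega)), ← integral_const_mul]
  congr 1
  ext x
  have h1 := aux_neS x
  have h2 := aux_neA x
  have h3 := I_ne_zero
  field_simp
  ring

lemma aux_A (n : ℕ) : ∫ x : ℝ, (((x : ℂ) - I) ^ (n + 2) * ((x : ℂ) + I) ^ 0)⁻¹ = 0 := by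
  have h := aux_int (n + 2) 0 (by omega)
  simp only [pow_zero, mul_one, sub_eq_add_neg] at h ⊢
  exact aux_zero _ (by simp) n h

lemma aux_B (n : ℕ) : ∫ x : ℝ, (((x : ℂ) - I) ^ 0 * ((x : ℂ) + I) ^ (n + 2))⁻¹ = 0 := by
  have h := aux_int 0 (n + 2) (by omega)
  simp only [pow_zero, one_mul] at h ⊢
  exact aux_zero _ (by simp) n h

lemma aux_main (s : ℕ) : ∀ a b : ℕ, a + b = s →
    ∫ x : ℝ, (((x : ℂ) - I) ^ (a + 1) * ((x : ℂ) + I) ^ (b + 1))⁻¹ =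
      Real.pi * (-1) ^ a * ((a + b).choose a : ℂ) * ((2 * I)⁻¹) ^ (a + b) := by
  induction s with
  | zero =>
    intro a b h
    obtain ⟨rfl, rfl⟩ : a = 0 ∧ b = 0 := by omega
    have : ∀ x : ℝ, (((x : ℂ) - I) ^ (0 + 1) * ((x : ℂ) + I) ^ (0 + 1))⁻¹ =
        (((1 + x ^ 2)⁻¹ : ℝ) : ℂ) := by
      intro x
      push_cast
      congr 1
      linear_combination -I_sq
    simp_rw [this]
    rw [integral_complex_ofReal, integral_univ_inv_one_add_sq]
    simp
  | succ s ih =>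
    intro a b h
    rw [aux_rec a b (by omega)]
    rcases a with _ | a
    · rcases b with _ | b
      · omega
      · rw [aux_B, ih 0 b (by omega)]
        simp
        ring
    · rcases b with _ | b
      · rw [aux_A, ih a 0 (by omega)]
        simp
        ring
      · rw [ih (a + 1) b (by omega), ih a (b + 1) (by omega)]
        have e : a + 1 + (b + 1) = (a + b + 1) + 1 := by omega
        have e1 : a + 1 + b = a + b + 1 := by omega
        have e2 : a + (b + 1) = a + b + 1 := by omega
        rw [e, e1, e2, Nat.choose_succ_succ (a + b + 1) a]
        push_cast
        ring

theorem stmt6 (m : ℕ) (hm : 1 ≤ m) :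
    ∫ x : ℝ, 1 / (((x : ℂ) - I) ^ (m + 3) * ((x : ℂ) + I) ^ m) =
      -(2 * (Real.pi : ℂ) * I) * (4 : ℂ) ^ (-((m : ℤ) + 1)) *
        ((2 * m + 1).choose (m + 2) : ℂ) := by
  obtain ⟨k, rfl⟩ : ∃ k, m = k + 1 := ⟨m - 1, by omega⟩
  simp only [one_div]
  have h := aux_main (k + 3 + k) (k + 3) k rfl
  rw [show k + 1 + 3 = k + 3 + 1 by ring, h]
  have e : 2 * (k + 1) + 1 = k + 3 + k := by ring
  have e2 : k + 1 + 2 = k + 3 := by ring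
  rw [e, e2]
  have hz : (4 : ℂ) ^ (-(((k + 1 : ℕ) : ℤ) + 1)) = (4⁻¹ : ℂ) ^ (k + 2) := by
    rw [zpow_neg, inv_pow]
    congr 1
  have hi : ((2 * I)⁻¹ : ℂ) ^ (k + 3 + k) = -(2 * I) * ((-1) ^ (k + 3)) * (4⁻¹) ^ (k + 2) := by
    have h2 : ((2 * I)⁻¹ : ℂ) ^ 2 = -1 * 4⁻¹ := by
      rw [inv_pow, mul_pow, I_sq]; norm_num
    have h3 : ((2 * I)⁻¹ : ℂ) = 2 * I * (-1 * 4⁻¹) := by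
      rw [← h2]; field_simp
    have : k + 3 + k = 2 * (k + 1) + 1 := by ring
    rw [this, pow_succ, pow_mul, h2, h3, mul_pow]
    ring
  have hs : ((-1 : ℂ) ^ (k + 3)) * (-1) ^ (k + 3) = 1 := by
    rw [← mul_pow]; simp
  rw [hz, hi]
  linear_combination (-(2 * (Real.pi : ℂ) * I) * (4⁻¹ : ℂ) ^ (k + 2) *
        ((k + 3 + k).choose (k + 3) : ℂ)) * hs
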